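/- Let H : ℝ × (ℝ^d × ℝ^d) → ℝ be a smooth Hamiltonian, 1-periodic in time, with a smooth flow φ satisfying the cocycle identity φ(t+1,z) = φ(t,φ(1,z)), and let ψ = φ(1,·). Let x₀ and y₀ be fixed points of ψ whose 1-periodic orbits x(t) = φ(t,x₀), y(t) = φ(t,y₀), t ∈ [0,1], satisfy c := 𝒜_H(y) − 𝒜_H(x) > 0, and let σ : [0,1] → ℝ^d × ℝ^d be a C¹ curve with σ(0) = x₀ and σ(1) = y₀. Then there exist a > 0 and a natural number N such that for every n ≥ N the length of ψⁿ∘σ satisfies ∫₀¹ ‖(ψⁿ∘σ)'(t)‖ dt ≥ a·√n. -/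

import Mathlib

open intervalIntegral

/-- The Liouville line integral `I(c) = ∫₀¹ ⟨p(t), q'(t)⟩ dt` of a curve
`c(t) = (q(t), p(t))` in `ℝ^d × ℝ^d`. -/
noncomputable def liouvilleIntegral (d : ℕ)
    (c : ℝ → EuclideanSpace ℝ (Fin d) × EuclideanSpace ℝ (Fin d)) : ℝ :=
  ∫ t in (0:ℝ)..1, @inner ℝ _ _ ((c t).2) (deriv (fun s => (c s).1) t)

/-- The Hamiltonian vector field `X_H(t,(q,p)) = (∂_p H(t,q,p), −∂_q H(t,q,p))`. -/
noncomputable def hamVectorField (d : ℕ)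
    (H : ℝ × (EuclideanSpace ℝ (Fin d) × EuclideanSpace ℝ (Fin d)) → ℝ) (t : ℝ)
    (z : EuclideanSpace ℝ (Fin d) × EuclideanSpace ℝ (Fin d)) :
    EuclideanSpace ℝ (Fin d) × EuclideanSpace ℝ (Fin d) :=
  (gradient (fun p => H (t, (z.1, p))) z.2, - gradient (fun q => H (t, (q, z.2))) z.1)

/-- The symplectic action `𝒜_H(γ) = I(γ) − ∫₀¹ H(t,γ(t)) dt` of a curve `γ`. -/
noncomputable def symplecticAction (d : ℕ)
    (H : ℝ × (EuclideanSpace ℝ (Fin d) × EuclideanSpace ℝ (Fin d)) → ℝ)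
    (γ : ℝ → EuclideanSpace ℝ (Fin d) × EuclideanSpace ℝ (Fin d)) : ℝ :=
  liouvilleIntegral d γ - ∫ t in (0:ℝ)..1, H (t, γ t)

/-!
A Hamiltonian flow is exact: with `X` the Hamiltonian vector field, Cartan's formula gives
`d/dt φ_t^*λ = d((λ(X) − H) ∘ φ_t)`. Integrating over `t ∈ [0, 1]`, the action of the orbit of `z`,
as a function `S` of `z`, satisfies `ψ^*λ − λ = dS`. Hence applying `ψ` to a curve from `x₀` to
`y₀`, both fixed, adds the constant `S(y₀) − S(x₀)` to its `λ`-integral, so the `λ`-integral of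
`ψⁿ ∘ σ` grows linearly in `n`. On the other hand `λ` is Lipschitz and the starting point is fixed,
so a curve of length `ℓ` has `λ`-integral at most `(‖λ_{x₀}‖ + Kℓ)ℓ`. A linearly growing quantity
bounded by a quadratic in `ℓ` forces `ℓ` to grow at least like `√n`.
-/

open Filter MeasureTheory Set
open scoped NNReal Topology Gradient

theorem exists_mul_sqrt_le_of_linear_le_quadratic {ℓ : ℕ → ℝ} {b g r K : ℝ} (hg : 0 < g)
    (hr : 0 ≤ r) (hK : 0 ≤ K) (hℓ : ∀ n, 0 ≤ ℓ n)
    (h : ∀ n, b + n * g ≤ (r + K * ℓ n) * ℓ n) :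
    ∃ a > 0, ∀ᶠ n : ℕ in atTop, a * √n ≤ ℓ n := by
  set a := min 1 (g / (2 * (r + K + 1)))
  have ha : 0 < a := by positivity
  have ha_one : a ≤ 1 := min_le_left _ _
  have ha_gap : (r + K) * a ≤ g / 2 := by
    have : a * (2 * (r + K + 1)) ≤ g := (le_div_iff₀ (by positivity)).1 (min_le_right _ _)
    linarith
  have hlarge : ∀ᶠ n : ℕ in atTop, -b < n * (g / 2) :=
    (tendsto_natCast_atTop_atTop.atTop_mul_const (half_pos hg)).eventually_gt_atTop _
  refine ⟨a, ha, ?_⟩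
  filter_upwards [hlarge, eventually_ge_atTop 1] with n hn hn_one
  by_contra! hlt
  have hsqrt : 1 ≤ √(n : ℝ) := Real.one_le_sqrt.2 (by exact_mod_cast hn_one)
  have hℓn := hℓ n
  have : (r + K * ℓ n) * ℓ n ≤ n * (g / 2) := calc
    (r + K * ℓ n) * ℓ n ≤ (r * √n + K * (1 * √n)) * (a * √n) := by
      gcongr
      · exact le_mul_of_one_le_right hr hsqrt
      · exact hlt.le.trans (by gcongr)
    _ = (r + K) * a * (√n * √n) := by ring
    _ = (r + K) * a * n := by rw [Real.mul_self_sqrt n.cast_nonneg]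
    _ ≤ n * (g / 2) := by rw [mul_comm]; gcongr
  linarith [h n]

section CurvesAndForms

variable {F : Type*} [NormedAddCommGroup F] [NormedSpace ℝ F]

/-- The length of a curve parametrized by `[0, 1]`. -/
noncomputable def curveLength (c : ℝ → F) : ℝ :=
  ∫ t in (0 : ℝ)..1, ‖deriv c t‖

/-- The integral `∫_c ω` of a 1-form along a curve parametrized by `[0, 1]`. -/
noncomputable def lineIntegral (ω : F → F →L[ℝ] ℝ) (c : ℝ → F) : ℝ :=
  ∫ t in (0 : ℝ)..1, ω (c t) (deriv c t)

/-- The pullback `ψ^*ω` of a 1-form. -/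
noncomputable def pullbackForm (ω : F → F →L[ℝ] ℝ) (ψ : F → F) (z : F) : F →L[ℝ] ℝ :=
  (ω (ψ z)).comp (fderiv ℝ ψ z)

variable {ω : F → F →L[ℝ] ℝ} {ψ : F → F} {S : F → ℝ} {c σ : ℝ → F} {K : ℝ≥0}

theorem curveLength_nonneg (c : ℝ → F) : 0 ≤ curveLength c :=
  intervalIntegral.integral_nonneg zero_le_one fun _ _ => norm_nonneg _

theorem norm_sub_le_curveLength (hc : ContDiff ℝ 1 c) {t : ℝ} (ht : t ∈ Icc (0 : ℝ) 1) :
    ‖c t - c 0‖ ≤ curveLength c := by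
  have hspeed : Continuous fun s => ‖deriv c s‖ := (hc.continuous_deriv le_rfl).norm
  calc
    ‖c t - c 0‖ ≤ ∫ s in (0 : ℝ)..t, ‖deriv c s‖ :=
      norm_sub_le_integral_of_norm_deriv_le_of_le ht.1 hc.continuous.continuousOn
        (hc.differentiable one_ne_zero).differentiableOn (.of_forall fun _ _ => le_rfl)
        (hspeed.intervalIntegrable _ _)
    _ ≤ curveLength c :=
      intervalIntegral.integral_mono_interval le_rfl ht.1 ht.2
        (.of_forall fun _ => norm_nonneg _) (hspeed.intervalIntegrable _ _)

theorem continuous_apply_deriv (hω : Continuous ω) (hc : ContDiff ℝ 1 c) :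
    Continuous fun t => ω (c t) (deriv c t) :=
  (hω.comp hc.continuous).clm_apply (hc.continuous_deriv le_rfl)

theorem lineIntegral_le_of_lipschitzWith (hω : LipschitzWith K ω) (hc : ContDiff ℝ 1 c) :
    lineIntegral ω c ≤ (‖ω (c 0)‖ + K * curveLength c) * curveLength c := by
  have norm_form_le : ∀ t ∈ Icc (0 : ℝ) 1, ‖ω (c t)‖ ≤ ‖ω (c 0)‖ + K * curveLength c :=
    fun t ht => calc
      ‖ω (c t)‖ ≤ ‖ω (c 0)‖ + ‖ω (c t) - ω (c 0)‖ := norm_le_norm_add_norm_sub' _ _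
      _ ≤ ‖ω (c 0)‖ + K * ‖c t - c 0‖ := by gcongr; exact hω.norm_sub_le _ _
      _ ≤ ‖ω (c 0)‖ + K * curveLength c := by gcongr; exact norm_sub_le_curveLength hc ht
  calc
    lineIntegral ω c ≤ ∫ t in (0 : ℝ)..1, (‖ω (c 0)‖ + K * curveLength c) * ‖deriv c t‖ := by
      refine intervalIntegral.integral_mono_on zero_le_one
        ((continuous_apply_deriv hω.continuous hc).intervalIntegrable _ _)
        ((continuous_const.mul (hc.continuous_deriv le_rfl).norm).intervalIntegrable _ _) ?_
      exact fun t ht => (Real.le_norm_self _).trans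
        ((ω (c t)).le_of_opNorm_le (norm_form_le t ht) _)
    _ = (‖ω (c 0)‖ + K * curveLength c) * curveLength c :=
      intervalIntegral.integral_const_mul _ _

theorem lineIntegral_comp_sub_lineIntegral (hω : Continuous ω) (hψ : ContDiff ℝ 1 ψ)
    (hS : ∀ z, HasFDerivAt S (pullbackForm ω ψ z - ω z) z) (hc : ContDiff ℝ 1 c) :
    lineIntegral ω (ψ ∘ c) - lineIntegral ω c = S (c 1) - S (c 0) := by
  have hintc := (continuous_apply_deriv hω hc).intervalIntegrable (μ := volume) 0 1
  have hintcψ := (continuous_apply_deriv hω (hψ.comp hc)).intervalIntegrable (μ := volume) 0 1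
  have hcd (t : ℝ) : HasDerivAt c (deriv c t) t := (hc.differentiable one_ne_zero t).hasDerivAt
  have hψc (t : ℝ) : deriv (ψ ∘ c) t = fderiv ℝ ψ (c t) (deriv c t) :=
    ((hψ.differentiable one_ne_zero (c t)).hasFDerivAt.comp_hasDerivAt t (hcd t)).deriv
  rw [lineIntegral, lineIntegral, ← intervalIntegral.integral_sub hintcψ hintc]
  refine intervalIntegral.integral_eq_sub_of_hasDerivAt (f := S ∘ c) (fun t _ => ?_)
    (hintcψ.sub hintc)
  rw [hψc]
  exact (hS (c t)).comp_hasDerivAt t (hcd t)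

theorem contDiff_iterate_comp (hψ : ContDiff ℝ 1 ψ) (hσ : ContDiff ℝ 1 σ) (n : ℕ) :
    ContDiff ℝ 1 (ψ^[n] ∘ σ) := by
  induction n with
  | zero => exact hσ
  | succ n ih => rw [Function.iterate_succ', Function.comp_assoc]; exact hψ.comp ih

theorem lineIntegral_iterate_comp (hω : Continuous ω) (hψ : ContDiff ℝ 1 ψ)
    (hS : ∀ z, HasFDerivAt S (pullbackForm ω ψ z - ω z) z) (hσ : ContDiff ℝ 1 σ)
    (hσ₀ : ψ.IsFixedPt (σ 0)) (hσ₁ : ψ.IsFixedPt (σ 1)) (n : ℕ) :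
    lineIntegral ω (ψ^[n] ∘ σ) = lineIntegral ω σ + n * (S (σ 1) - S (σ 0)) := by
  induction n with
  | zero => simp
  | succ n ih =>
    have hstep := lineIntegral_comp_sub_lineIntegral hω hψ hS (contDiff_iterate_comp hψ hσ n)
    simp only [Function.comp_apply, (hσ₀.iterate n).eq, (hσ₁.iterate n).eq, ih] at hstep
    rw [Function.iterate_succ', Function.comp_assoc]
    push_cast
    linarith

theorem exists_mul_sqrt_le_curveLength_iterate_comp (hω : LipschitzWith K ω) (hψ : ContDiff ℝ 1 ψ)
    (hS : ∀ z, HasFDerivAt S (pullbackForm ω ψ z - ω z) z) (hσ : ContDiff ℝ 1 σ)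
    (hσ₀ : ψ.IsFixedPt (σ 0)) (hσ₁ : ψ.IsFixedPt (σ 1)) (hgap : S (σ 0) < S (σ 1)) :
    ∃ a > 0, ∀ᶠ n : ℕ in atTop, a * √n ≤ curveLength (ψ^[n] ∘ σ) := by
  refine exists_mul_sqrt_le_of_linear_le_quadratic (b := lineIntegral ω σ)
    (r := ‖ω (σ 0)‖) (sub_pos.2 hgap) (norm_nonneg _) K.coe_nonneg
    (fun n => curveLength_nonneg _) fun n => ?_
  have hbound := lineIntegral_le_of_lipschitzWith hω (contDiff_iterate_comp hψ hσ n)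
  rwa [lineIntegral_iterate_comp hω.continuous hψ hS hσ hσ₀ hσ₁, Function.comp_apply,
    (hσ₀.iterate n).eq] at hbound

end CurvesAndForms

section Derivatives

variable {E F G : Type*} [NormedAddCommGroup E] [NormedAddCommGroup F] [NormedAddCommGroup G]

theorem hasDerivAt_partial_fst {𝕜 : Type*} [NontriviallyNormedField 𝕜] [NormedSpace 𝕜 F]
    [NormedSpace 𝕜 G] {f : 𝕜 × F → G} {t : 𝕜} {z : F} (hf : DifferentiableAt 𝕜 f (t, z)) :
    HasDerivAt (fun s => f (s, z)) (fderiv 𝕜 f (t, z) (1, 0)) t :=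
  hf.hasFDerivAt.comp_hasDerivAt t ((hasDerivAt_id t).prodMk (hasDerivAt_const t z))

theorem hasFDerivAt_partial_snd {𝕜 : Type*} [NontriviallyNormedField 𝕜] [NormedSpace 𝕜 E]
    [NormedSpace 𝕜 F] [NormedSpace 𝕜 G] {f : E × F → G} {x : E} {z : F}
    (hf : DifferentiableAt 𝕜 f (x, z)) :
    HasFDerivAt (fun w => f (x, w)) ((fderiv 𝕜 f (x, z)).comp (.inr 𝕜 E F)) z :=
  hf.hasFDerivAt.comp z (hasFDerivAt_prodMk_right x z)

theorem continuous_fderiv_partial_snd {𝕜 : Type*} [NontriviallyNormedField 𝕜] [NormedSpace 𝕜 E]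
    [NormedSpace 𝕜 F] [NormedSpace 𝕜 G] {f : E × F → G} (hf : ContDiff 𝕜 1 f) :
    Continuous fun x : E × F => fderiv 𝕜 (fun w => f (x.1, w)) x.2 := by
  simp only [(hasFDerivAt_partial_snd (hf.differentiable one_ne_zero _)).fderiv]
  exact (hf.continuous_fderiv one_ne_zero).clm_comp continuous_const

theorem hasFDerivAt_intervalIntegral_of_contDiff [NormedSpace ℝ F] [NormedSpace ℝ G]
    {f : ℝ × F → G} (hf : ContDiff ℝ 1 f) (a b : ℝ) (z : F) :
    HasFDerivAt (fun w => ∫ t in a..b, f (t, w))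
      (∫ t in a..b, fderiv ℝ (fun w => f (t, w)) z) z := by
  have hpartial (t : ℝ) (w : F) := hasFDerivAt_partial_snd (hf.differentiable one_ne_zero (t, w))
  have hcont := continuous_fderiv_partial_snd hf
  obtain ⟨C, hC⟩ : ∃ C, ∀ t ∈ uIcc a b, ‖fderiv ℝ (fun w => f (t, w)) z‖ ≤ C :=
    isCompact_uIcc.exists_bound_of_continuousOn (hcont.comp (.prodMk_left z)).continuousOn
  have hbound : ∀ᶠ w in 𝓝 z, ∀ t ∈ uIcc a b, ‖fderiv ℝ (fun u => f (t, u)) w‖ ≤ C + 1 := by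
    refine isCompact_uIcc.eventually_forall_of_forall_eventually fun t ht => ?_
    have hlt : ‖fderiv ℝ (fun w => f (t, w)) z‖ < C + 1 := (hC t ht).trans_lt (lt_add_one C)
    have hnorm : Continuous fun x : F × ℝ => ‖fderiv ℝ (fun w => f (x.2, w)) x.1‖ :=
      (hcont.comp continuous_swap).norm
    exact (hnorm.continuousAt.eventually_lt (x₀ := (z, t)) continuousAt_const hlt).mono
      fun _ => le_of_lt
  exact intervalIntegral.hasFDerivAt_integral_of_dominated_of_fderiv_le hbound
    (.of_forall fun w => (hf.continuous.comp (.prodMk_left w)).aestronglyMeasurable)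
    ((hf.continuous.comp (.prodMk_left z)).intervalIntegrable _ _)
    (hcont.comp (.prodMk_left z)).aestronglyMeasurable
    (.of_forall fun t ht w hw => hw t (uIoc_subset_uIcc ht)) intervalIntegrable_const
    (.of_forall fun t _ w _ => (hpartial t w).differentiableAt.hasFDerivAt)

theorem fderiv_prod_eq_inner_gradient {E₁ E₂ : Type*} [NormedAddCommGroup E₁]
    [InnerProductSpace ℝ E₁] [CompleteSpace E₁] [NormedAddCommGroup E₂]
    [InnerProductSpace ℝ E₂] [CompleteSpace E₂] {f : E₁ × E₂ → ℝ} {z : E₁ × E₂}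
    (hf : DifferentiableAt ℝ f z) (v : E₁ × E₂) :
    fderiv ℝ f z v =
      inner ℝ (∇ (fun q => f (q, z.2)) z.1) v.1 + inner ℝ (∇ (fun p => f (z.1, p)) z.2) v.2 := by
  have hq : HasFDerivAt (fun q => f (q, z.2)) _ z.1 :=
    hf.hasFDerivAt.comp z.1 (hasFDerivAt_prodMk_left z.1 z.2)
  have hp : HasFDerivAt (fun p => f (z.1, p)) _ z.2 := hasFDerivAt_partial_snd hf
  rw [inner_gradient_left, inner_gradient_left, hq.fderiv, hp.fderiv]
  simp [← map_add]

end Derivatives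

section Hamiltonian

variable {F : Type*} [NormedAddCommGroup F] [NormedSpace ℝ F]

/-- The action `∫_γ ω − ∫₀¹ H(t, γ(t)) dt` of a curve, relative to a 1-form `ω`. -/
noncomputable def hamiltonianAction (ω : F → F →L[ℝ] ℝ) (H : ℝ × F → ℝ) (γ : ℝ → F) : ℝ :=
  lineIntegral ω γ - ∫ t in (0 : ℝ)..1, H (t, γ t)

/-- `X` is a Hamiltonian vector field of `H` with respect to the 2-form `dω`, with the sign
convention `dω(X_t, ·) = −dH_t`. -/
def IsHamiltonianVectorField (ω : F → F →L[ℝ] ℝ) (H : ℝ × F → ℝ) (X : ℝ → F → F) : Prop :=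
  ∀ t z v, fderiv ℝ ω z (X t z) v - fderiv ℝ ω z v (X t z) = -fderiv ℝ (fun w => H (t, w)) z v

/-- The integrand `ω(∂_t φ) − H` of the action along the trajectories of `φ`, as a function of time
and initial point; `∂_t φ` is written as the derivative of `φ` in the direction `(1, 0)`. -/
noncomputable def actionDensity (ω : F → F →L[ℝ] ℝ) (H : ℝ × F → ℝ) (φ : ℝ × F → F)
    (x : ℝ × F) : ℝ :=
  ω (φ x) (fderiv ℝ φ x (1, 0)) - H (x.1, φ x)

variable {ω : F → F →L[ℝ] ℝ} {H : ℝ × F → ℝ} {X : ℝ → F → F} {φ : ℝ × F → F}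

theorem contDiff_actionDensity (hω : ContDiff ℝ 1 ω) (hH : ContDiff ℝ 1 H)
    (hφ : ContDiff ℝ 2 φ) : ContDiff ℝ 1 (actionDensity ω H φ) := by
  have hφ₁ : ContDiff ℝ 1 φ := hφ.of_le one_le_two
  have hDφ : ContDiff ℝ 1 (fderiv ℝ φ) := hφ.fderiv_right (by norm_num)
  exact ((hω.comp hφ₁).clm_apply (hDφ.clm_apply contDiff_const)).sub
    (hH.comp (contDiff_fst.prodMk hφ₁))

theorem hamiltonianAction_trajectory (hω : Continuous ω) (hH : Continuous H)
    (hφ : ContDiff ℝ 1 φ) (z : F) :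
    hamiltonianAction ω H (fun t => φ (t, z)) =
      ∫ t in (0 : ℝ)..1, actionDensity ω H φ (t, z) := by
  have htraj : ContDiff ℝ 1 fun t => φ (t, z) := hφ.comp (contDiff_prodMk_left z)
  have hvel (t : ℝ) : deriv (fun s => φ (s, z)) t = fderiv ℝ φ (t, z) (1, 0) :=
    (hasDerivAt_partial_fst (hφ.differentiable one_ne_zero _)).deriv
  have hHtraj : Continuous fun t => H (t, φ (t, z)) :=
    hH.comp (continuous_id.prodMk htraj.continuous)
  rw [hamiltonianAction, lineIntegral, ← intervalIntegral.integral_sub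
    ((continuous_apply_deriv hω htraj).intervalIntegrable _ _)
    (hHtraj.intervalIntegrable _ _)]
  simp only [hvel, actionDensity]

theorem fderiv_actionDensity_apply (hω : Differentiable ℝ ω) (hH : Differentiable ℝ H)
    (hφ : ContDiff ℝ 2 φ) (t : ℝ) (z v : F) :
    fderiv ℝ (fun w => actionDensity ω H φ (t, w)) z v =
      fderiv ℝ ω (φ (t, z)) (fderiv ℝ φ (t, z) (0, v)) (fderiv ℝ φ (t, z) (1, 0)) +
        ω (φ (t, z)) (fderiv ℝ (fderiv ℝ φ) (t, z) (0, v) (1, 0)) -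
          fderiv ℝ (fun w => H (t, w)) (φ (t, z)) (fderiv ℝ φ (t, z) (0, v)) := by
  have hDφ : Differentiable ℝ (fderiv ℝ φ) :=
    (hφ.fderiv_right (m := 1) (by norm_num)).differentiable one_ne_zero
  have hHt : Differentiable ℝ fun w => H (t, w) := hH.comp (by fun_prop)
  have hφt := hasFDerivAt_partial_snd (hφ.differentiable two_ne_zero (t, z))
  have hvel := (hasFDerivAt_partial_snd (hDφ (t, z))).clm_apply
    (hasFDerivAt_const ((1 : ℝ), (0 : F)) z)
  have hdensity := (((hω _).hasFDerivAt.comp z hφt).clm_apply hvel).sub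
    ((hHt _).hasFDerivAt.comp z hφt)
  refine (DFunLike.congr_fun hdensity.fderiv v).trans ?_
  simp [add_comm]

theorem hasDerivAt_pullbackForm (hω : Differentiable ℝ ω) (hφ : ContDiff ℝ 2 φ) (t : ℝ) (z : F) :
    HasDerivAt (fun s => pullbackForm ω (fun w => φ (s, w)) z)
      ((fderiv ℝ ω (φ (t, z)) (fderiv ℝ φ (t, z) (1, 0)) ∘L fderiv ℝ φ (t, z) +
        ω (φ (t, z)) ∘L fderiv ℝ (fderiv ℝ φ) (t, z) (1, 0)) ∘L .inr ℝ ℝ F) t := by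
  have hφd : Differentiable ℝ φ := hφ.differentiable two_ne_zero
  have hDφ : Differentiable ℝ (fderiv ℝ φ) :=
    (hφ.fderiv_right (m := 1) (by norm_num)).differentiable one_ne_zero
  have hωφ := (hω _).hasFDerivAt.comp_hasDerivAt t (hasDerivAt_partial_fst (hφd (t, z)))
  simp only [pullbackForm, (hasFDerivAt_partial_snd (hφd _)).fderiv,
    ← ContinuousLinearMap.comp_assoc]
  simpa using (hωφ.clm_comp (hasDerivAt_partial_fst (hDφ (t, z)))).clm_comp
    (hasDerivAt_const t (ContinuousLinearMap.inr ℝ ℝ F))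

-- Cartan's formula: `d/dt φ_t^*ω = φ_t^*(ι_X dω + d(ω(X)))`, and `ι_X dω = −dH_t`.
theorem hasDerivAt_pullbackForm_of_isHamiltonianVectorField (hω : Differentiable ℝ ω)
    (hH : Differentiable ℝ H) (hφ : ContDiff ℝ 2 φ) (hX : IsHamiltonianVectorField ω H X)
    (hflow : ∀ t z, deriv (fun s => φ (s, z)) t = X t (φ (t, z))) (t : ℝ) (z : F) :
    HasDerivAt (fun s => pullbackForm ω (fun w => φ (s, w)) z)
      (fderiv ℝ (fun w => actionDensity ω H φ (t, w)) z) t := by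
  refine (hasDerivAt_pullbackForm hω hφ t z).congr_deriv ?_
  ext v
  have hvel : fderiv ℝ φ (t, z) (1, 0) = X t (φ (t, z)) := by
    rw [← hflow, (hasDerivAt_partial_fst (hφ.differentiable two_ne_zero _)).deriv]
  have hmixed : fderiv ℝ (fderiv ℝ φ) (t, z) (1, 0) (0, v) =
      fderiv ℝ (fderiv ℝ φ) (t, z) (0, v) (1, 0) :=
    (hφ.contDiffAt.isSymmSndFDerivAt (by simp)).eq _ _
  rw [fderiv_actionDensity_apply hω hH hφ]
  simp only [ContinuousLinearMap.comp_apply, ContinuousLinearMap.inr_apply,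
    add_apply, hvel, hmixed]
  linarith [hX t (φ (t, z)) (fderiv ℝ φ (t, z) (0, v))]

theorem hasFDerivAt_hamiltonianAction_trajectory (hω : ContDiff ℝ 1 ω) (hH : ContDiff ℝ 1 H)
    (hφ : ContDiff ℝ 2 φ) (hX : IsHamiltonianVectorField ω H X) (hφ₀ : ∀ z, φ (0, z) = z)
    (hflow : ∀ t z, deriv (fun s => φ (s, z)) t = X t (φ (t, z))) (z : F) :
    HasFDerivAt (fun w => hamiltonianAction ω H fun t => φ (t, w))
      (pullbackForm ω (fun w => φ (1, w)) z - ω z) z := by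
  have hdensity := contDiff_actionDensity hω hH hφ
  have hcont : Continuous fun t : ℝ => fderiv ℝ (fun w => actionDensity ω H φ (t, w)) z :=
    (continuous_fderiv_partial_snd hdensity).comp (.prodMk_left z)
  have hinit : pullbackForm ω (fun w => φ (0, w)) z = ω z := by
    simp [pullbackForm, hφ₀]
  rw [← hinit, ← intervalIntegral.integral_eq_sub_of_hasDerivAt
    (fun t _ => hasDerivAt_pullbackForm_of_isHamiltonianVectorField
      (hω.differentiable one_ne_zero) (hH.differentiable one_ne_zero) hφ hX hflow t z)
    (hcont.intervalIntegrable 0 1)]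
  simp only [hamiltonianAction_trajectory hω.continuous hH.continuous (hφ.of_le one_le_two)]
  exact hasFDerivAt_intervalIntegral_of_contDiff hdensity 0 1 z

theorem stmt_6_general {K : ℝ≥0} (hω : ContDiff ℝ 1 ω) (hωK : LipschitzWith K ω)
    (hH : ContDiff ℝ 1 H) (hφ : ContDiff ℝ 2 φ) (hX : IsHamiltonianVectorField ω H X)
    (hφ₀ : ∀ z, φ (0, z) = z)
    (hflow : ∀ t z, deriv (fun s => φ (s, z)) t = X t (φ (t, z))) {x₀ y₀ : F}
    (hx₀ : φ (1, x₀) = x₀) (hy₀ : φ (1, y₀) = y₀)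
    (hgap : 0 < hamiltonianAction ω H (fun t => φ (t, y₀)) -
      hamiltonianAction ω H (fun t => φ (t, x₀)))
    {σ : ℝ → F} (hσ : ContDiff ℝ 1 σ) (hσ₀ : σ 0 = x₀) (hσ₁ : σ 1 = y₀) :
    ∃ a > (0 : ℝ), ∃ N : ℕ, ∀ n : ℕ, N ≤ n →
      a * √n ≤ curveLength ((fun z => φ (1, z))^[n] ∘ σ) := by
  subst hσ₀ hσ₁
  have hψ : ContDiff ℝ 1 fun z => φ (1, z) :=
    (hφ.of_le one_le_two).comp (contDiff_prodMk_right 1)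
  simpa only [eventually_atTop] using exists_mul_sqrt_le_curveLength_iterate_comp hωK hψ
    (hasFDerivAt_hamiltonianAction_trajectory hω hH hφ hX hφ₀ hflow) hσ hx₀ hy₀ (sub_pos.1 hgap)

end Hamiltonian

section Liouville

/-- The Liouville 1-form `λ = p·dq` on `E × E`, which is linear in the base point `(q, p)`. -/
noncomputable def liouvilleForm (E : Type*) [NormedAddCommGroup E] [InnerProductSpace ℝ E] :
    E × E →L[ℝ] E × E →L[ℝ] ℝ :=
  ContinuousLinearMap.bilinearComp (innerSL ℝ) (.snd ℝ E E) (.fst ℝ E E)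

theorem liouvilleForm_apply {E : Type*} [NormedAddCommGroup E] [InnerProductSpace ℝ E]
    (z v : E × E) : liouvilleForm E z v = inner ℝ z.2 v.1 :=
  rfl

variable {d : ℕ} {H : ℝ × (EuclideanSpace ℝ (Fin d) × EuclideanSpace ℝ (Fin d)) → ℝ}

theorem symplecticAction_eq_hamiltonianAction
    {γ : ℝ → EuclideanSpace ℝ (Fin d) × EuclideanSpace ℝ (Fin d)} (hγ : Differentiable ℝ γ) :
    symplecticAction d H γ = hamiltonianAction (liouvilleForm (EuclideanSpace ℝ (Fin d))) H γ := by
  have hfst (t : ℝ) : deriv (fun s => (γ s).1) t = (deriv γ t).1 :=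
    ((hasFDerivAt_fst (p := γ t)).comp_hasDerivAt t (hγ t).hasDerivAt).deriv
  simp only [symplecticAction, liouvilleIntegral, hamiltonianAction, lineIntegral,
    liouvilleForm_apply, hfst]

theorem isHamiltonianVectorField_hamVectorField (hH : Differentiable ℝ H) :
    IsHamiltonianVectorField (liouvilleForm (EuclideanSpace ℝ (Fin d))) H (hamVectorField d H) := by
  intro t z v
  have hHt : Differentiable ℝ fun w => H (t, w) := hH.comp (by fun_prop)
  rw [fderiv_prod_eq_inner_gradient (hHt z), ContinuousLinearMap.fderiv, liouvilleForm_apply,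
    liouvilleForm_apply, hamVectorField, inner_neg_left, real_inner_comm _ v.2]
  ring

end Liouville

/-- `√n`-growth of the length of `ψⁿ∘σ` for the time-1 map `ψ` of a 1-periodic Hamiltonian,
when `σ` joins two fixed points of `ψ` whose 1-periodic orbits have positive action
difference. -/
theorem stmt_6 (d : ℕ)
    (H : ℝ × (EuclideanSpace ℝ (Fin d) × EuclideanSpace ℝ (Fin d)) → ℝ)
    (φ : ℝ × (EuclideanSpace ℝ (Fin d) × EuclideanSpace ℝ (Fin d)) →
      EuclideanSpace ℝ (Fin d) × EuclideanSpace ℝ (Fin d))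
    (hH : ContDiff ℝ (⊤ : ℕ∞) H) (hφ : ContDiff ℝ (⊤ : ℕ∞) φ)
    (hHper : ∀ t z, H (t + 1, z) = H (t, z))
    (hφ0 : ∀ z, φ (0, z) = z)
    (hφflow : ∀ t z, deriv (fun s => φ (s, z)) t = hamVectorField d H t (φ (t, z)))
    (hcocycle : ∀ t z, φ (t + 1, z) = φ (t, φ (1, z)))
    (x₀ y₀ : EuclideanSpace ℝ (Fin d) × EuclideanSpace ℝ (Fin d))
    (hx₀ : φ (1, x₀) = x₀) (hy₀ : φ (1, y₀) = y₀)
    (hgap : 0 < symplecticAction d H (fun t => φ (t, y₀)) -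
      symplecticAction d H (fun t => φ (t, x₀)))
    (σ : ℝ → EuclideanSpace ℝ (Fin d) × EuclideanSpace ℝ (Fin d)) (hσ : ContDiff ℝ 1 σ)
    (hσ0 : σ 0 = x₀) (hσ1 : σ 1 = y₀) :
    ∃ a > (0:ℝ), ∃ N : ℕ, ∀ n : ℕ, N ≤ n →
      a * Real.sqrt n ≤ ∫ t in (0:ℝ)..1, ‖deriv ((fun z => φ (1, z))^[n] ∘ σ) t‖ := by
  have hH₁ : ContDiff ℝ 1 H := contDiff_infty.1 hH 1
  have hφ₂ : ContDiff ℝ 2 φ := contDiff_infty.1 hφ 2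
  have hdiff (z) : Differentiable ℝ fun t => φ (t, z) :=
    (hφ₂.differentiable two_ne_zero).comp (by fun_prop)
  rw [symplecticAction_eq_hamiltonianAction (hdiff _),
    symplecticAction_eq_hamiltonianAction (hdiff _)] at hgap
  exact stmt_6_general (liouvilleForm (EuclideanSpace ℝ (Fin d))).contDiff
    (liouvilleForm (EuclideanSpace ℝ (Fin d))).lipschitz hH₁ hφ₂
    (isHamiltonianVectorField_hamVectorField (hH₁.differentiable one_ne_zero))
    hφ0 hφflow hx₀ hy₀ hgap hσ hσ0 hσ1
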